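/- For every real k > 0, the integral ∫₀^∞ sin(k·t)/(e^t − 1) dt converges and equals (π·coth(π·k))/2 − 1/(2k). -/

import Mathlib

open MeasureTheory Real

/-- The real hyperbolic cotangent. -/
noncomputable def coth (x : ℝ) : ℝ := Real.cosh x / Real.sinh x

open Set

lemma integrableOn_id_mul_exp_neg_mul {b : ℝ} (hb : 0 < b) :
    IntegrableOn (fun t : ℝ => t * Real.exp (-b * t)) (Ioi 0) := by
  simpa using integrableOn_rpow_mul_exp_neg_mul_rpow (p := 1) (s := 1) (by norm_num) one_pos hb

lemma integral_id_mul_exp_neg_mul {b : ℝ} (hb : 0 < b) :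
    ∫ t in Ioi (0 : ℝ), t * Real.exp (-b * t) = 1 / b ^ 2 := by
  have h := Real.integral_rpow_mul_exp_neg_mul_Ioi (a := 2) two_pos hb
  norm_num at h
  simpa using h

lemma integrableOn_sin_mul_exp_neg_mul (k : ℝ) {b : ℝ} (hb : 0 < b) :
    IntegrableOn (fun t : ℝ => Real.sin (k * t) * Real.exp (-b * t)) (Ioi 0) := by
  refine (integrableOn_exp_mul_Ioi (neg_lt_zero.mpr hb) 0).mono'
    (by fun_prop) (.of_forall fun t => ?_)
  rw [norm_mul, norm_of_nonneg (exp_pos _).le]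
  exact mul_le_of_le_one_left (exp_pos _).le (abs_sin_le_one _)

lemma integral_sin_mul_exp_neg_mul (k : ℝ) {b : ℝ} (hb : 0 < b) :
    ∫ t in Ioi (0 : ℝ), Real.sin (k * t) * Real.exp (-b * t) = k / (b ^ 2 + k ^ 2) := by
  have hre : (⟨-b, k⟩ : ℂ).re < 0 := neg_lt_zero.mpr hb
  have h := congrArg Complex.im (integral_exp_mul_complex_Ioi hre 0)
  rw [← RCLike.im_to_complex, ← integral_im (integrableOn_exp_mul_complex_Ioi hre 0)] at h
  simp only [RCLike.im_to_complex, Complex.exp_im, Complex.re_mul_ofReal,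
    Complex.im_mul_ofReal] at h
  simp_rw [mul_comm (Real.sin _)]
  rw [h]
  simp [Complex.normSq_apply, pow_two, neg_div]

lemma integral_norm_sin_mul_exp_neg_mul_le {k b : ℝ} (hk : 0 ≤ k) (hb : 0 < b) :
    ∫ t in Ioi (0 : ℝ), ‖Real.sin (k * t) * Real.exp (-b * t)‖ ≤ k * (1 / b ^ 2) := by
  rw [← integral_id_mul_exp_neg_mul hb, ← integral_const_mul]
  refine setIntegral_mono_on (integrableOn_sin_mul_exp_neg_mul k hb).norm
    ((integrableOn_id_mul_exp_neg_mul hb).const_mul k) measurableSet_Ioi fun t ht => ?_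
  have ht : 0 < t := ht
  rw [norm_mul, norm_of_nonneg (exp_pos _).le, ← mul_assoc]
  gcongr
  exact abs_sin_le_abs.trans_eq (abs_of_nonneg (by positivity))

lemma mul_exp_half_le_exp_sub_one {t : ℝ} (ht : 0 ≤ t) :
    t * Real.exp (t / 2) ≤ Real.exp t - 1 := by
  have h := Real.self_le_sinh_iff.mpr (div_nonneg ht two_pos.le)
  rw [Real.sinh_eq] at h
  have h1 : Real.exp (t / 2) * Real.exp (t / 2) = Real.exp t := by rw [← exp_add, add_halves]
  have h2 : Real.exp (-(t / 2)) * Real.exp (t / 2) = 1 := by simp [← exp_add]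
  have h3 := mul_le_mul_of_nonneg_right h (exp_pos (t / 2)).le
  linarith

lemma integrableOn_sin_div_exp_sub_one {k : ℝ} (hk : 0 ≤ k) :
    IntegrableOn (fun t => Real.sin (k * t) / (Real.exp t - 1)) (Ioi 0) := by
  refine ((integrableOn_exp_mul_Ioi (a := -1 / 2) (by norm_num) 0).const_mul k).mono'
    (Measurable.aestronglyMeasurable (by fun_prop)) ?_
  filter_upwards [ae_restrict_mem measurableSet_Ioi] with t ht
  have ht : 0 < t := ht
  have hle := mul_exp_half_le_exp_sub_one ht.le
  have hpos : 0 < t * Real.exp (t / 2) := by positivity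
  rw [norm_div, norm_of_nonneg (hpos.le.trans hle), div_le_iff₀ (hpos.trans_le hle)]
  calc ‖Real.sin (k * t)‖ ≤ k * t :=
        abs_sin_le_abs.trans_eq (abs_of_nonneg (by positivity))
    _ = k * Real.exp (-1 / 2 * t) * (t * Real.exp (t / 2)) := by
        rw [show -1 / 2 * t = -(t / 2) by ring, exp_neg]
        field_simp
    _ ≤ _ := by gcongr

lemma hasSum_exp_neg_succ_mul {t : ℝ} (ht : 0 < t) :
    HasSum (fun n : ℕ => Real.exp (-(n + 1 : ℝ) * t)) (1 / (Real.exp t - 1)) := by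
  have h := (hasSum_geometric_of_lt_one (exp_pos (-t)).le
    (Real.exp_lt_one_iff.mpr (neg_lt_zero.mpr ht))).mul_left (Real.exp (-t))
  have h1 : Real.exp t - 1 ≠ 0 := (sub_pos.mpr (one_lt_exp_iff.mpr ht)).ne'
  convert! h using 1
  · ext n
    rw [← exp_nat_mul, ← exp_add]
    congr 1
    ring
  · rw [exp_neg, ← div_eq_mul_inv, inv_eq_one_div, one_sub_div (exp_pos t).ne']
    field_simp

lemma tsum_div_sq_add_sq {k : ℝ} (hk : 0 < k) :
    ∑' n : ℕ, k / ((n + 1 : ℝ) ^ 2 + k ^ 2) = π * coth (π * k) / 2 - 1 / (2 * k) := by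
  have hz : (k : ℂ) * Complex.I ∈ Complex.integerComplement :=
    UpperHalfPlane.coe_mem_integerComplement ⟨k * Complex.I, by simpa using hk⟩
  have h := cot_series_rep' hz
  have hk' : (k : ℂ) ≠ 0 := by exact_mod_cast hk.ne'
  have hs : Complex.sinh (π * k) ≠ 0 := by
    exact_mod_cast (Real.sinh_pos_iff.mpr (mul_pos pi_pos hk)).ne'
  have hterm (n : ℕ) : 1 / ((k : ℂ) * Complex.I - (n + 1)) + 1 / (k * Complex.I + (n + 1)) =
      (-2 * Complex.I) * ((k / ((n + 1 : ℝ) ^ 2 + k ^ 2) : ℝ) : ℂ) := by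
    have h1 : (k : ℂ) * Complex.I - (n + 1) ≠ 0 := fun h => by
      simpa [hk.ne'] using congrArg Complex.im h
    have h2 : (k : ℂ) * Complex.I + (n + 1) ≠ 0 := fun h => by
      simpa [hk.ne'] using congrArg Complex.im h
    have h3 : ((n : ℂ) + 1) ^ 2 + k ^ 2 ≠ 0 := by
      exact_mod_cast (by positivity : ((n : ℝ) + 1) ^ 2 + k ^ 2 ≠ 0)
    push_cast
    field_simp
    linear_combination (2 * Complex.I * k ^ 3) * Complex.I_sq
  simp_rw [hterm] at h
  rw [tsum_mul_left, ← Complex.ofReal_tsum, Complex.cot_eq_cos_div_sin, ← mul_assoc,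
    Complex.cos_mul_I, Complex.sin_mul_I] at h
  generalize ∑' n : ℕ, k / ((n + 1 : ℝ) ^ 2 + k ^ 2) = S at h ⊢
  apply Complex.ofReal_injective
  rw [coth]
  push_cast
  field_simp at h ⊢
  linear_combination -h + 2 * k * Complex.sinh (π * k) * S * Complex.I_sq

/-- For every real `k > 0`, the integral `∫₀^∞ sin(k t)/(e^t − 1) dt` converges and equals
`π coth(π k)/2 − 1/(2k)`. -/
theorem integral_sin_div_exp_sub_one (k : ℝ) (hk : 0 < k) :
    IntegrableOn (fun t => Real.sin (k * t) / (Real.exp t - 1)) (Set.Ioi 0) ∧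
      ∫ t in Set.Ioi (0 : ℝ), Real.sin (k * t) / (Real.exp t - 1) =
        π * coth (π * k) / 2 - 1 / (2 * k) := by
  refine ⟨integrableOn_sin_div_exp_sub_one hk.le, ?_⟩
  have hpos (n : ℕ) : (0 : ℝ) < n + 1 := by positivity
  have hsum : Summable fun n : ℕ =>
      ∫ t in Ioi (0 : ℝ), ‖Real.sin (k * t) * Real.exp (-(n + 1 : ℝ) * t)‖ := by
    have hsq : Summable fun n : ℕ => k * (1 / (n + 1 : ℝ) ^ 2) := by
      simpa using (((summable_nat_add_iff 1).mpr
        (Real.summable_one_div_nat_pow.mpr one_lt_two)).mul_left k)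
    exact hsq.of_nonneg_of_le (fun n => integral_nonneg fun _ => norm_nonneg _)
      fun n => integral_norm_sin_mul_exp_neg_mul_le hk.le (hpos n)
  have h := hasSum_integral_of_summable_integral_norm
    (fun n => integrableOn_sin_mul_exp_neg_mul k (hpos n)) hsum
  simp_rw [integral_sin_mul_exp_neg_mul k (hpos _)] at h
  rw [← tsum_div_sq_add_sq hk, h.tsum_eq]
  refine setIntegral_congr_fun measurableSet_Ioi fun t ht => ?_
  rw [tsum_mul_left, (hasSum_exp_neg_succ_mul ht).tsum_eq, mul_one_div]
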